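/- The PF-D4 coefficient function f1 satisfies lim_{v→0⁺} f1(v) = 90987349/53222400 and lim_{v→0⁺} (f1(v) − 90987349/53222400)/v² = −16301796103/58118860800; in particular f1 tends to the corresponding coefficient of the classical Quinlan–Tremaine method as v → 0, and its v²-Taylor coefficient is five times that of the PF-D0 coefficient b1. -/

import Mathlib

open Filter

/-- The variable coefficient `f₁(v)` of the method PF-D4 (phase lag and its first,
second, third and fourth derivatives vanish at frequency `v`). -/
noncomputable def pfd4f1 (v : ℝ) : ℝ :=
  (216 * v ^ 6 / (Real.sin (v / 2)) ^ 10
      - 810 * v ^ 2 / (Real.sin (v / 2)) ^ 6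
      - 54 * (157 * v ^ 2 + 80) / (Real.sin (v / 2)) ^ 4
      + 36 * (1840 - 2257 * v ^ 2) / (Real.sin (v / 2)) ^ 2
      - 12288 * (20 * v ^ 4 - 71 * v ^ 2 + 20) * Real.cos v
      - 3 * v * (Real.cos (v / 2) / Real.sin (v / 2))
          * ((4682 * v ^ 2
              + 9 / (Real.sin (v / 2)) ^ 2
                  * (5 * v ^ 2 / (Real.sin (v / 2)) ^ 2 + 54 * v ^ 2 + 96)
              + 5856) / (Real.sin (v / 2)) ^ 2
            + 2520 * (31 * v ^ 2 - 48))
      - 45 * v ^ 2 / (Real.cos (v / 2)) ^ 6 * (v * Real.tan (v / 2) - 6)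
      + 56 * v * (1024 * (11 * v ^ 2 - 12) * Real.sin v
          + 135 * (48 - 31 * v ^ 2) * Real.tan (v / 2))
      - 18 / (Real.cos (v / 2)) ^ 4
          * ((-373) * v ^ 2 + 3 * (21 * v ^ 2 + 16) * v * Real.tan (v / 2) - 80)
      - 2 / (Real.cos (v / 2)) ^ 2
          * ((-39246) * v ^ 2 + (6733 * v ^ 2 + 6384) * v * Real.tan (v / 2) + 28320))
    / (24576 * v ^ 6)

/-!
Multiplied by `v ^ 4`, the numerator of `f₁` is a polynomial in `v ^ 2`, `sinc (v / 2)`,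
`cos (v / 2)` and the inverse squares of the last two, so its expansion in powers of `v ^ 2` follows
from the Taylor series of sine and cosine by rational arithmetic. All terms below `v ^ 10` cancel;
dividing the next two by the denominator `24576 * v ^ 10` gives the two limits.
-/

open Asymptotics Topology Finset

/-- The function `f` has the asymptotic expansion `∑ aᵢ tⁱ + O(tⁿ)` along the filter `l`, where the
sum is over `i < n`. The coefficients are rational so that identities between them can be decided
by evaluation. -/
def HasExpansion {α 𝕜 : Type*} [NormedField 𝕜] (l : Filter α) (t : α → 𝕜) (n : ℕ) (f : α → 𝕜)
    (a : ℕ → ℚ) : Prop :=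
  (fun x => f x - ∑ i ∈ range n, (a i : 𝕜) * t x ^ i) =O[l] fun x => t x ^ n

/-- The Cauchy product of two coefficient sequences. This is the multiplication of `ℚ⟦X⟧` in a form
that the kernel can evaluate. -/
def cauchyProd (a b : ℕ → ℚ) (n : ℕ) : ℚ := ∑ i ∈ range (n + 1), a i * b (n - i)

theorem sum_cauchyProd_mul_pow {𝕜 : Type*} [Field 𝕜] [CharZero 𝕜] (a b : ℕ → ℚ) (n : ℕ) (y : 𝕜) :
    ∑ k ∈ range n, (cauchyProd a b k : 𝕜) * y ^ k =
      ∑ i ∈ range n, (a i : 𝕜) * y ^ i * ∑ j ∈ range (n - i), (b j : 𝕜) * y ^ j := by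
  simp only [cauchyProd, Rat.cast_sum, Rat.cast_mul, mul_sum, sum_mul]
  rw [← sum_range_diag_flip]
  refine sum_congr rfl fun k _ => sum_congr rfl fun i hi => ?_
  rw [← Nat.add_sub_of_le (mem_range_succ_iff.1 hi), pow_add, Nat.add_sub_cancel_left]
  ring

namespace HasExpansion

variable {α 𝕜 : Type*} [NormedField 𝕜] {l : Filter α} {t f g : α → 𝕜} {n m : ℕ} {a b : ℕ → ℚ}

theorem congr_coeff (hf : HasExpansion l t n f a) (h : ∀ k < n, a k = b k) :
    HasExpansion l t n f b :=
  IsBigO.congr_left hf fun x => by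
    rw [sum_congr rfl fun k hk => by rw [h k (mem_range.1 hk)]]

theorem congr' (hf : HasExpansion l t n f a) (h : f =ᶠ[l] g) : HasExpansion l t n g a :=
  IsBigO.congr' hf (h.sub .rfl) .rfl

theorem mono (hf : HasExpansion l t n f a) {l' : Filter α} (hl : l' ≤ l) :
    HasExpansion l' t n f a :=
  IsBigO.mono hf hl

theorem of_sum_eq (h : ∀ x, f x = ∑ i ∈ range n, (a i : 𝕜) * t x ^ i) :
    HasExpansion l t n f a := by
  simpa [HasExpansion, h] using isBigO_zero _ _

theorem const (q : ℚ) : HasExpansion l t (n + 1) (fun _ => (q : 𝕜)) (Pi.single 0 q) :=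
  of_sum_eq fun x => by simp [sum_range_succ']

theorem ofNat (k : ℕ) [k.AtLeastTwo] :
    HasExpansion l t (n + 1) (fun _ => (OfNat.ofNat k : 𝕜)) (Pi.single 0 (OfNat.ofNat k)) := by
  exact_mod_cast const (l := l) (t := t) (n := n) (OfNat.ofNat k : ℚ)

theorem one : HasExpansion l t (n + 1) (fun _ => (1 : 𝕜)) (Pi.single 0 1) := by
  exact_mod_cast const (l := l) (t := t) (n := n) 1

theorem of_le (ht : t =O[l] (1 : α → 𝕜)) (hf : HasExpansion l t n f a) (hmn : m ≤ n) :
    HasExpansion l t m f a := by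
  induction n, hmn using Nat.le_induction with
  | base => exact hf
  | succ n _ ih =>
    have hpow : (fun x => t x ^ (n + 1)) =O[l] fun x => t x ^ n := by
      simpa [pow_succ] using (isBigO_refl (fun x => t x ^ n) l).mul ht
    refine ih <| ((IsBigO.trans hf hpow).add
      ((isBigO_refl (fun x => t x ^ n) l).const_mul_left (a n : 𝕜))).congr_left fun x => ?_
    rw [sum_range_succ]
    ring

theorem gauge_pow (ht : t =O[l] (1 : α → 𝕜)) (k : ℕ) :
    HasExpansion l t n (fun x => t x ^ k) (Pi.single k 1) := by
  refine of_le (n := n + (k + 1)) ht (of_sum_eq fun x => ?_) (n.le_add_right _)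
  rw [sum_eq_single_of_mem k (mem_range.2 (by lia)) fun i _ hi => by simp [hi]]
  simp

theorem isBigO_one (ht : t =O[l] (1 : α → 𝕜)) (hf : HasExpansion l t n f a) :
    f =O[l] (1 : α → 𝕜) := by
  refine (hf.of_le ht n.zero_le).congr (fun x => ?_) fun x => ?_ <;> simp

theorem tendsto (ht : Tendsto t l (𝓝 0)) (hf : HasExpansion l t (n + 1) f a) :
    Tendsto f l (𝓝 (a 0)) := by
  have h : (fun x => f x - a 0) =O[l] t := by
    simpa [HasExpansion] using hf.of_le (ht.isBigO_one 𝕜) (Nat.le_add_left 1 n)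
  simpa using (h.trans_tendsto ht).add_const (a 0 : 𝕜)

theorem tendsto_sub_div (ht : Tendsto t l (𝓝 0)) (ht0 : ∀ᶠ x in l, t x ≠ 0)
    (hf : HasExpansion l t (n + 2) f a) :
    Tendsto (fun x => (f x - a 0) / t x) l (𝓝 (a 1)) := by
  have h2 := hf.of_le (ht.isBigO_one 𝕜) (Nat.le_add_left 2 n)
  have h : (fun x => (f x - a 0) / t x - a 1) =O[l] t := by
    refine (IsBigO.mul h2 (isBigO_refl (fun x => (t x)⁻¹) l)).congr' ?_ ?_
    · filter_upwards [ht0] with x hx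
      simp only [sum_range_succ, sum_range_zero]
      field_simp
      ring
    · filter_upwards [ht0] with x hx
      field_simp
  simpa using (h.trans_tendsto ht).add_const (a 1 : 𝕜)

theorem div_pow (ht : ∀ᶠ x in l, t x ≠ 0) (hf : HasExpansion l t (m + n) f a)
    (ha : ∀ k < m, a k = 0) :
    HasExpansion l t n (fun x => f x / t x ^ m) fun k => a (m + k) := by
  refine (IsBigO.mul hf (isBigO_refl (fun x => (t x ^ m)⁻¹) l)).congr' ?_ ?_
  · filter_upwards [ht] with x hx
    have hlow : ∑ i ∈ range m, (a i : 𝕜) * t x ^ i = 0 :=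
      sum_eq_zero fun i hi => by simp [ha i (mem_range.1 hi)]
    rw [sum_range_add, hlow, zero_add, sub_mul, sum_mul, div_eq_mul_inv]
    congr 1
    refine sum_congr rfl fun i _ => ?_
    rw [pow_add]
    field_simp
  · filter_upwards [ht] with x hx
    rw [pow_add]
    field_simp

theorem of_hasSum {c : ℝ} (ht : Tendsto t l (𝓝 0)) (ha : ∀ k, ‖(a k : 𝕜)‖ ≤ c)
    (hf : ∀ᶠ x in l, HasSum (fun k => (a k : 𝕜) * t x ^ k) (f x)) : HasExpansion l t n f a := by
  have hc : 0 ≤ c := (norm_nonneg _).trans (ha 0)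
  refine IsBigO.of_bound (2 * c) ?_
  filter_upwards [hf, ht.norm.eventually_le_const (by norm_num : ‖(0 : 𝕜)‖ < 1 / 2)] with x hfx hx
  have hterm (k : ℕ) : ‖(a k : 𝕜) * t x ^ k‖ ≤ c * ‖t x‖ ^ k := by
    rw [norm_mul, norm_pow]
    exact mul_le_mul_of_nonneg_right (ha k) (by positivity)
  rw [norm_sub_rev, norm_pow]
  calc _ ≤ c * ‖t x‖ ^ n / (1 - ‖t x‖) :=
        norm_sub_le_of_geometric_bound_of_hasSum (hx.trans_lt one_half_lt_one) hterm hfx n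
    _ ≤ 2 * c * ‖t x‖ ^ n := by
        rw [div_le_iff₀ (by linarith)]
        nlinarith [mul_nonneg hc (pow_nonneg (norm_nonneg (t x)) n)]

section CharZero

variable [CharZero 𝕜]

theorem add (hf : HasExpansion l t n f a) (hg : HasExpansion l t n g b) :
    HasExpansion l t n (fun x => f x + g x) (a + b) :=
  (IsBigO.add hf hg).congr_left fun x => by
    simp only [Pi.add_apply, Rat.cast_add, add_mul, sum_add_distrib]
    ring

theorem sub (hf : HasExpansion l t n f a) (hg : HasExpansion l t n g b) :
    HasExpansion l t n (fun x => f x - g x) (a - b) :=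
  (IsBigO.sub hf hg).congr_left fun x => by
    simp only [Pi.sub_apply, Rat.cast_sub, sub_mul, sum_sub_distrib]
    ring

theorem mul (ht : t =O[l] (1 : α → 𝕜)) (hf : HasExpansion l t n f a)
    (hg : HasExpansion l t n g b) :
    HasExpansion l t n (fun x => f x * g x) (cauchyProd a b) := by
  have hleft : (fun x => (f x - ∑ i ∈ range n, (a i : 𝕜) * t x ^ i) * g x) =O[l]
      fun x => t x ^ n := by
    have h := IsBigO.mul (f₁ := fun x => f x - ∑ i ∈ range n, (a i : 𝕜) * t x ^ i)
      (g₁ := fun x => t x ^ n) hf (hg.isBigO_one ht)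
    simpa using h
  have hright : (fun x => ∑ i ∈ range n, (a i : 𝕜) * t x ^ i *
      (g x - ∑ j ∈ range (n - i), (b j : 𝕜) * t x ^ j)) =O[l] fun x => t x ^ n := by
    refine IsBigO.fun_sum fun i hi => ?_
    refine (((isBigO_refl (fun x => t x ^ i) l).const_mul_left (a i : 𝕜)).mul
      (hg.of_le ht (n.sub_le i))).congr_right fun x => ?_
    rw [← pow_add, Nat.add_sub_of_le (mem_range.1 hi).le]
  refine (hleft.add hright).congr_left fun x => ?_
  rw [sum_cauchyProd_mul_pow]
  simp only [mul_sub, sum_sub_distrib, ← sum_mul]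
  ring

theorem pow (ht : t =O[l] (1 : α → 𝕜)) (hf : HasExpansion l t (n + 1) f a) (k : ℕ) :
    HasExpansion l t (n + 1) (fun x => f x ^ k) ((cauchyProd a)^[k] (Pi.single 0 1)) := by
  induction k with
  | zero => simpa using one
  | succ k ih =>
    rw [Function.iterate_succ_apply']
    simpa only [pow_succ'] using hf.mul ht ih

theorem inv (ht : Tendsto t l (𝓝 0)) (hf : HasExpansion l t (n + 1) f a)
    (hab : ∀ k < n + 1, cauchyProd a b k = Pi.single (M := fun _ => ℚ) 0 1 k) :
    HasExpansion l t (n + 1) (fun x => (f x)⁻¹) b := by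
  have ha : (a 0 : 𝕜) ≠ 0 := by
    have h0 : a 0 * b 0 = 1 := by simpa [cauchyProd] using hab 0 n.succ_pos
    exact_mod_cast left_ne_zero_of_mul_eq_one h0
  have hb : HasExpansion l t (n + 1) (fun x => ∑ i ∈ range (n + 1), (b i : 𝕜) * t x ^ i) b :=
    of_sum_eq fun _ => rfl
  have hresidual : (fun x => 1 - f x * ∑ i ∈ range (n + 1), (b i : 𝕜) * t x ^ i) =O[l]
      fun x => t x ^ (n + 1) := by
    simpa [HasExpansion] using one.sub ((hf.mul (ht.isBigO_one 𝕜) hb).congr_coeff hab)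
  refine ((((hf.tendsto ht).inv₀ ha).isBigO_one 𝕜).mul hresidual).congr' ?_
    (.of_forall fun x => one_mul _)
  filter_upwards [(hf.tendsto ht).eventually_ne ha] with x hx
  field_simp

end CharZero

end HasExpansion

/-- Coefficients of `cos (v / 2)` in powers of `v ^ 2`. -/
def cosHalfCoeff (k : ℕ) : ℚ := (-1 / 4) ^ k / (2 * k).factorial

/-- Coefficients of `sinc (v / 2)` in powers of `v ^ 2`. -/
def sincHalfCoeff (k : ℕ) : ℚ := (-1 / 4) ^ k / (2 * k + 1).factorial

theorem tendsto_sq_zero : Tendsto (fun v : ℝ => v ^ 2) (𝓝 0) (𝓝 0) :=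
  (continuous_pow 2).tendsto' 0 0 (by norm_num)

theorem norm_neg_quarter_pow_div_factorial_le_one (k m : ℕ) :
    ‖(((-1 / 4) ^ k / m.factorial : ℚ) : ℝ)‖ ≤ 1 := by
  have hm : (1 : ℝ) ≤ m.factorial := mod_cast m.factorial_pos
  push_cast
  rw [norm_div, norm_pow, Real.norm_natCast, div_le_one (by linarith)]
  exact (pow_le_one₀ (norm_nonneg _) (by norm_num)).trans hm

theorem neg_quarter_pow_mul_sq_pow (v : ℝ) (k : ℕ) :
    (-1 / 4) ^ k * (v ^ 2) ^ k = (-1) ^ k * (v / 2) ^ (2 * k) := by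
  rw [pow_mul, ← mul_pow, ← mul_pow]
  ring

theorem hasExpansion_cos_half (n : ℕ) :
    HasExpansion (𝓝 0) (· ^ 2) n (fun v => Real.cos (v / 2)) cosHalfCoeff := by
  refine .of_hasSum tendsto_sq_zero (fun k => norm_neg_quarter_pow_div_factorial_le_one k _)
    (.of_forall fun v => (Real.hasSum_cos (v / 2)).congr_fun fun k => ?_)
  simp only [cosHalfCoeff]
  push_cast
  rw [div_mul_eq_mul_div, neg_quarter_pow_mul_sq_pow]

theorem hasExpansion_sinc_half (n : ℕ) :
    HasExpansion (𝓝 0) (· ^ 2) n (fun v => Real.sinc (v / 2)) sincHalfCoeff := by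
  refine .of_hasSum tendsto_sq_zero (fun k => norm_neg_quarter_pow_div_factorial_le_one k _)
    (.of_forall fun v => ?_)
  rcases eq_or_ne v 0 with rfl | hv
  · convert hasSum_single 0 ?_ using 1 <;> simp +contextual [sincHalfCoeff]
  · rw [Real.sinc_of_ne_zero (by positivity)]
    refine ((Real.hasSum_sin (v / 2)).div_const (v / 2)).congr_fun fun k => ?_
    simp only [sincHalfCoeff]
    push_cast
    rw [div_mul_eq_mul_div, neg_quarter_pow_mul_sq_pow, pow_succ]
    field_simp

/-- Coefficients of `1 / sinc (v / 2) ^ 2` in powers of `v ^ 2`, up to the order needed. -/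
def sincHalfSqInvCoeff (k : ℕ) : ℚ :=
  [1, 1 / 12, 1 / 240, 1 / 6048, 1 / 172800, 1 / 5322240, 691 / 118879488000].getD k 0

/-- Coefficients of `1 / cos (v / 2) ^ 2` in powers of `v ^ 2`, up to the order needed. -/
def cosHalfSqInvCoeff (k : ℕ) : ℚ :=
  [1, 1 / 4, 1 / 24, 17 / 2880, 31 / 40320, 691 / 7257600, 5461 / 479001600].getD k 0

theorem hasExpansion_sinc_half_sq_inv :
    HasExpansion (𝓝 0) (· ^ 2) 7 (fun v => (Real.sinc (v / 2) ^ 2)⁻¹) sincHalfSqInvCoeff :=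
  ((hasExpansion_sinc_half 7).pow (tendsto_sq_zero.isBigO_one ℝ) 2).inv tendsto_sq_zero
    (by decide +kernel)

theorem hasExpansion_cos_half_sq_inv :
    HasExpansion (𝓝 0) (· ^ 2) 7 (fun v => (Real.cos (v / 2) ^ 2)⁻¹) cosHalfSqInvCoeff :=
  ((hasExpansion_cos_half 7).pow (tendsto_sq_zero.isBigO_one ℝ) 2).inv tendsto_sq_zero
    (by decide +kernel)

/-- The numerator of `f₁` multiplied by `v ^ 4`, as a polynomial in `w = v ^ 2`, `U = sinc (v / 2)`,
`C = cos (v / 2)`, `p = 1 / U ^ 2` and `q = 1 / C ^ 2`. -/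
noncomputable def scaledNumerator (w U C p q : ℝ) : ℝ :=
  221184 * p ^ 5 - 51840 * p ^ 3 - 864 * (80 + 157 * w) * p ^ 2
    + 144 * w * (1840 - 2257 * w) * p
    - 12288 * w ^ 2 * (20 - 71 * w + 20 * w ^ 2) * (2 * C ^ 2 - 1)
    - U * C * p * (24 * w * (5856 + 4682 * w) * p + 864 * (96 + 54 * w) * p ^ 2 + 17280 * p ^ 3
        + 15120 * w ^ 2 * (31 * w - 48))
    + 57344 * w ^ 3 * (11 * w - 12) * (U * C) + 3780 * w ^ 3 * (48 - 31 * w) * (U * C * q)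
    + 270 * w ^ 3 * q ^ 3 - 45 / 2 * w ^ 4 * q ^ 3 * (U * C * q)
    + 18 * w ^ 2 * (80 + 373 * w) * q ^ 2 - 27 * w ^ 3 * (16 + 21 * w) * q ^ 2 * (U * C * q)
    - 2 * w ^ 2 * (28320 - 39246 * w) * q - w ^ 3 * (6384 + 6733 * w) * q * (U * C * q)

theorem hasExpansion_scaledNumerator :
    HasExpansion (𝓝 0) (· ^ 2) 7
      (fun v => scaledNumerator (v ^ 2) (Real.sinc (v / 2)) (Real.cos (v / 2))
        (Real.sinc (v / 2) ^ 2)⁻¹ (Real.cos (v / 2) ^ 2)⁻¹)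
      (24576 * (Pi.single 5 (90987349 / 53222400) + Pi.single 6 (-16301796103 / 58118860800))) := by
  have ht : (fun v : ℝ => v ^ 2) =O[𝓝 0] (1 : ℝ → ℝ) := tendsto_sq_zero.isBigO_one ℝ
  have hw : HasExpansion (𝓝 (0 : ℝ)) (· ^ 2) 7 (fun v => v ^ 2) (Pi.single 1 1) := by
    simpa using HasExpansion.gauge_pow ht 1
  have hU := hasExpansion_sinc_half 7
  have hC := hasExpansion_cos_half 7
  apply HasExpansion.congr_coeff
  · unfold scaledNumerator
    rw [show (45 / 2 : ℝ) = ((45 / 2 : ℚ) : ℝ) by norm_num]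
    -- Follow the syntax tree; beyond reducible transparency `add` would also match differences.
    with_reducible apply_rules (maxDepth := 1000) [hw, hU, hC, hasExpansion_sinc_half_sq_inv,
      hasExpansion_cos_half_sq_inv, HasExpansion.one, HasExpansion.ofNat, HasExpansion.const,
      HasExpansion.sub, HasExpansion.add, HasExpansion.gauge_pow ht, HasExpansion.pow ht,
      HasExpansion.mul ht]
  · decide +kernel

theorem pfd4f1_eq_scaledNumerator_div {v : ℝ} (hv : v ≠ 0) (hs : Real.sinc (v / 2) ≠ 0)
    (hc : Real.cos (v / 2) ≠ 0) :
    pfd4f1 v = scaledNumerator (v ^ 2) (Real.sinc (v / 2)) (Real.cos (v / 2))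
      (Real.sinc (v / 2) ^ 2)⁻¹ (Real.cos (v / 2) ^ 2)⁻¹ / (v ^ 2) ^ 5 * 24576⁻¹ := by
  have hsin : Real.sin (v / 2) = v / 2 * Real.sinc (v / 2) := by
    rw [Real.sinc_of_ne_zero (by positivity)]
    field_simp
  have hsin_two : Real.sin v = 2 * Real.sin (v / 2) * Real.cos (v / 2) := by
    rw [← Real.sin_two_mul, mul_div_cancel₀ v two_ne_zero]
  have hcos_two : Real.cos v = 2 * Real.cos (v / 2) ^ 2 - 1 := by
    rw [← Real.cos_two_mul, mul_div_cancel₀ v two_ne_zero]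
  rw [pfd4f1, scaledNumerator, Real.tan_eq_sin_div_cos, hsin_two, hcos_two, hsin]
  generalize Real.sinc (v / 2) = U at *
  generalize Real.cos (v / 2) = C at *
  field_simp
  ring

theorem hasExpansion_pfd4f1 :
    HasExpansion (𝓝[≠] 0) (· ^ 2) 2 pfd4f1
      (Pi.single 0 (90987349 / 53222400) + Pi.single 1 (-16301796103 / 58118860800)) := by
  have hsinc : ∀ᶠ v : ℝ in 𝓝[≠] 0, Real.sinc (v / 2) ≠ 0 :=
    (((hasExpansion_sinc_half 1).tendsto tendsto_sq_zero).eventually_ne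
      (by simp [sincHalfCoeff])).filter_mono nhdsWithin_le_nhds
  have hcos : ∀ᶠ v : ℝ in 𝓝[≠] 0, Real.cos (v / 2) ≠ 0 :=
    (((hasExpansion_cos_half 1).tendsto tendsto_sq_zero).eventually_ne
      (by simp [cosHalfCoeff])).filter_mono nhdsWithin_le_nhds
  have hne : ∀ᶠ v : ℝ in 𝓝[≠] 0, v ≠ 0 := self_mem_nhdsWithin
  have hquot := (hasExpansion_scaledNumerator.mono nhdsWithin_le_nhds).div_pow (m := 5) (n := 2)
    (hne.mono fun v hv => pow_ne_zero 2 hv) (by decide +kernel)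
  have ht : (fun v : ℝ => v ^ 2) =O[𝓝[≠] 0] (1 : ℝ → ℝ) :=
    (tendsto_sq_zero.isBigO_one ℝ).mono nhdsWithin_le_nhds
  refine ((hquot.mul ht (.const 24576⁻¹)).congr_coeff (by decide +kernel)).congr' ?_
  filter_upwards [hne, hsinc, hcos] with v hv hs hc
  rw [pfd4f1_eq_scaledNumerator_div hv hs hc]
  push_cast
  rfl

theorem pfd4_f1_limit_general :
    Tendsto pfd4f1 (𝓝[≠] 0) (𝓝 (90987349 / 53222400)) ∧
    Tendsto (fun v : ℝ => (pfd4f1 v - 90987349 / 53222400) / v ^ 2) (𝓝[≠] 0)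
      (𝓝 (-16301796103 / 58118860800)) := by
  have hsq : Tendsto (fun v : ℝ => v ^ 2) (𝓝[≠] 0) (𝓝 0) :=
    tendsto_sq_zero.mono_left nhdsWithin_le_nhds
  have hne : ∀ᶠ v : ℝ in 𝓝[≠] 0, v ^ 2 ≠ 0 :=
    eventually_mem_nhdsWithin.mono fun v hv => pow_ne_zero 2 hv
  constructor
  · simpa using hasExpansion_pfd4f1.tendsto hsq
  · simpa using hasExpansion_pfd4f1.tendsto_sub_div hsq hne

/-- The PF-D4 coefficient `f₁` tends to the classical Quinlan–Tremaine coefficient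
as `v → 0⁺`, and its `v²`-Taylor coefficient is five times that of the PF-D0
coefficient `b₁`. -/
theorem pfd4_f1_limit :
    Tendsto pfd4f1 (nhdsWithin 0 (Set.Ioi 0)) (nhds (90987349 / 53222400)) ∧
    Tendsto (fun v : ℝ => (pfd4f1 v - 90987349 / 53222400) / v ^ 2)
      (nhdsWithin 0 (Set.Ioi 0)) (nhds (-16301796103 / 58118860800)) :=
  pfd4_f1_limit_general.imp (.mono_left · (nhdsGT_le_nhdsNE 0)) (.mono_left · (nhdsGT_le_nhdsNE 0))
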